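/- arXiv:2309.09859 — 3 statements merged into one kernel-verified Lean document; each statement's English description precedes it below -/
import Mathlib

section
/- Let k > 0, λ > 0 and γ_th > 0. For γ̄ > 0 define the outage probability F(γ̄) = (1/Γ(k)) ∫_0^{√(γ_th/γ̄)/λ} t^{k−1} e^{−t} dt. Then lim_{γ̄ → ∞} γ̄^{k/2} F(γ̄) = γ_th^{k/2} / (Γ(k+1) λ^k). In particular the SNR outage probability decays like (γ_th/γ̄)^{k/2}, i.e. the diversity order is k/2 and the coding gain is 1/(Γ(k+1) λ^k). -/
/-!
For `0 ≤ t ≤ x` one has `exp (-x) ≤ exp (-t) ≤ 1`, so the incomplete Gamma integral up to `x` lies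
between `exp (-x) * (x ^ k / k)` and `x ^ k / k` (`lower_gamma_bounds`). With
`x = √(γth / γbar) / lam` the product `γbar ^ (k/2) * x ^ k` is the constant
`γth ^ (k/2) / lam ^ k`, and `x → 0` as `γbar → ∞`; squeezing and `Γ(k+1) = k Γ(k)` give the limit.
-/

open Real Filter

lemma lower_gamma_bounds {k x : ℝ} (hk : 0 < k) (hx : 0 ≤ x) :
    Real.exp (-x) * (x ^ k / k) ≤ ∫ t in (0:ℝ)..x, t ^ (k - 1) * Real.exp (-t) ∧
      ∫ t in (0:ℝ)..x, t ^ (k - 1) * Real.exp (-t) ≤ x ^ k / k := by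
  have hpow : IntervalIntegrable (fun t : ℝ => t ^ (k - 1)) MeasureTheory.volume 0 x :=
    intervalIntegral.intervalIntegrable_rpow' (by linarith)
  have hint : IntervalIntegrable (fun t : ℝ => t ^ (k - 1) * Real.exp (-t))
      MeasureTheory.volume 0 x :=
    hpow.mul_continuousOn (by fun_prop)
  have hval : ∫ t in (0:ℝ)..x, t ^ (k - 1) = x ^ k / k := by
    rw [integral_rpow (Or.inl (by linarith)), sub_add_cancel, Real.zero_rpow hk.ne', sub_zero]
  rw [← hval]
  constructor
  · rw [← intervalIntegral.integral_const_mul]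
    refine intervalIntegral.integral_mono_on hx (hpow.const_mul _) hint fun t ht => ?_
    rw [mul_comm]
    exact mul_le_mul_of_nonneg_left (Real.exp_le_exp.2 (neg_le_neg ht.2))
      (Real.rpow_nonneg ht.1 _)
  · refine intervalIntegral.integral_mono_on hx hint hpow fun t ht => ?_
    exact mul_le_of_le_one_right (Real.rpow_nonneg ht.1 _)
      (Real.exp_le_one_iff.2 (neg_nonpos.2 ht.1))

theorem stmt_10 (k lam γth : ℝ) (hk : 0 < k) (hlam : 0 < lam) (hγth : 0 < γth) :
    Tendsto (fun γbar : ℝ =>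
        γbar ^ (k/2) * ((1 / Real.Gamma k) *
          ∫ t in (0:ℝ)..(Real.sqrt (γth / γbar) / lam), t ^ (k - 1) * Real.exp (-t)))
      atTop (nhds (γth ^ (k/2) / (Real.Gamma (k+1) * lam ^ k))) := by
  have hG : 0 < Real.Gamma k := Real.Gamma_pos_of_pos hk
  have hlk : 0 < lam ^ k := Real.rpow_pos_of_pos hlam k
  set C := γth ^ (k/2) / (Real.Gamma (k+1) * lam ^ k) with hC
  have hscale : ∀ γ : ℝ, 0 < γ →
      γ ^ (k/2) * ((1 / Real.Gamma k) * ((Real.sqrt (γth / γ) / lam) ^ k / k)) = C := by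
    intro γ hγ
    have hγk : 0 < γ ^ (k/2) := Real.rpow_pos_of_pos hγ _
    rw [hC, Real.Gamma_add_one hk.ne', Real.div_rpow (Real.sqrt_nonneg _) hlam.le,
      Real.sqrt_eq_rpow, ← Real.rpow_mul (by positivity), one_div_mul_eq_div,
      Real.div_rpow hγth.le hγ.le]
    field_simp
  have hx0 : Tendsto (fun γ : ℝ => Real.sqrt (γth / γ) / lam) atTop (nhds 0) := by
    have h : Tendsto (fun γ : ℝ => γth / γ) atTop (nhds 0) := tendsto_const_nhds.div_atTop tendsto_id
    simpa using h.sqrt.div_const lam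
  have hlow : Tendsto (fun γ : ℝ => Real.exp (-(Real.sqrt (γth / γ) / lam)) * C) atTop (nhds C) := by
    simpa using ((Real.continuous_exp.tendsto _).comp hx0.neg).mul_const C
  refine tendsto_of_tendsto_of_tendsto_of_le_of_le' hlow tendsto_const_nhds ?_ ?_
  · filter_upwards [eventually_gt_atTop 0] with γ hγ
    have hb := (lower_gamma_bounds hk (x := Real.sqrt (γth / γ) / lam) (by positivity)).1
    rw [← hscale γ hγ, mul_left_comm, mul_left_comm (Real.exp _)]
    gcongr
  · filter_upwards [eventually_gt_atTop 0] with γ hγ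
    have hb := (lower_gamma_bounds hk (x := Real.sqrt (γth / γ) / lam) (by positivity)).2
    rw [← hscale γ hγ]
    gcongr
end

section
/- Let k > 0, λ > 0 and ν > 0, and let Q(x) = (1/√(2π)) ∫_x^∞ e^{−t²/2} dt. For γ̄ > 0 define the average bit error rate P̄(γ̄) = ∫_0^∞ Q(x √(ν γ̄)) · (x^{k−1} e^{−x/λ} / (Γ(k) λ^k)) dx. Then lim_{γ̄ → ∞} γ̄^{k/2} P̄(γ̄) = 2^{(k−1)/2} Γ((k+1)/2) / ( √(2π) · k · Γ(k) · λ^k · ν^{k/2} ). In particular the average BER decays like γ̄^{−k/2}, so the achievable diversity order is k/2. -/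
open Real Filter MeasureTheory

/-!
With `s = √(ν γ̄)`, the substitution `y = x s` turns `γ̄^{k/2} P̄(γ̄)` into
`(Γ(k) λ^k ν^{k/2})⁻¹ ∫₀^∞ Q(y) y^{k-1} e^{-y/(s λ)} dy`. As `s → ∞` the exponential factor
increases to `1`, so by dominated convergence the limit is governed by the moment
`∫₀^∞ Q(y) y^{k-1} dy`. Writing `Q` as an integral and exchanging the order of integration, this
moment is `(k √(2π))⁻¹ ∫₀^∞ t^k e^{-t²/2} dt`, which is a Gamma value. The same Fubini argument
(`integrable_kernel`) shows that `Q(y) y^{k-1}` is integrable, hence a legitimate dominating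
function.
-/

/-- The Gaussian Q-function `Q(x) = (1/√(2π)) ∫_x^∞ e^{−t²/2} dt`. -/
noncomputable def gaussQ (x : ℝ) : ℝ :=
  (1 / Real.sqrt (2 * π)) * ∫ t in Set.Ioi x, Real.exp (-t^2 / 2)

/-- The integrand `1_{y < t} y^{k-1} e^{-t²/2}` on the plane; its `t`-integral is
`√(2π) Q(y) y^{k-1}`. -/
noncomputable def momentKernel (k : ℝ) (p : ℝ × ℝ) : ℝ :=
  Set.indicator {p : ℝ × ℝ | p.1 < p.2} (fun p => p.1 ^ (k - 1) * exp (-p.2 ^ 2 / 2)) p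

lemma momentKernel_measurable (k : ℝ) : Measurable (momentKernel k) := by
  refine Measurable.indicator ?_ (measurableSet_lt measurable_fst measurable_snd)
  fun_prop

lemma momentKernel_eq_left (k t : ℝ) :
    (fun y => momentKernel k (y, t)) =
      (Set.Iio t).indicator (fun y => y ^ (k - 1) * exp (-t ^ 2 / 2)) := by
  ext y
  simp [momentKernel, Set.indicator]

lemma momentKernel_eq_right (k y : ℝ) :
    (fun t => momentKernel k (y, t)) =
      (Set.Ioi y).indicator (fun t => y ^ (k - 1) * exp (-t ^ 2 / 2)) := by
  ext t
  simp [momentKernel, Set.indicator]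

lemma momentKernel_nonneg (k t : ℝ) {y : ℝ} (hy : 0 < y) : 0 ≤ momentKernel k (y, t) := by
  simp only [momentKernel, Set.indicator]
  split_ifs <;> positivity

lemma integrable_left {k t : ℝ} (hk : 0 < k) (ht : 0 < t) :
    IntegrableOn (fun y => momentKernel k (y, t)) (Set.Ioi 0) := by
  rw [momentKernel_eq_left, IntegrableOn, integrable_indicator_iff measurableSet_Iio,
    IntegrableOn, Measure.restrict_restrict measurableSet_Iio]
  have h := (intervalIntegral.intervalIntegrable_rpow' (a := 0) (b := t)
    (show -1 < k - 1 by linarith)).mul_const (exp (-t ^ 2 / 2))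
  rw [intervalIntegrable_iff_integrableOn_Ioo_of_le ht.le] at h
  rwa [Set.inter_comm, Set.Ioi_inter_Iio]

lemma integral_left {k t : ℝ} (hk : 0 < k) (ht : 0 < t) :
    ∫ y in Set.Ioi 0, momentKernel k (y, t) = k⁻¹ * (t ^ k * exp (-(1 / 2) * t ^ 2)) := by
  rw [momentKernel_eq_left, setIntegral_indicator measurableSet_Iio, Set.Ioi_inter_Iio,
    ← integral_Ioc_eq_integral_Ioo, ← intervalIntegral.integral_of_le ht.le,
    intervalIntegral.integral_mul_const, integral_rpow (Or.inl (by linarith))]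
  rw [sub_add_cancel, zero_rpow hk.ne', show -t ^ 2 / 2 = -(1 / 2) * t ^ 2 by ring]
  ring

lemma integral_right (k : ℝ) {y : ℝ} (hy : 0 < y) :
    ∫ t in Set.Ioi 0, momentKernel k (y, t) = √(2 * π) * (gaussQ y * y ^ (k - 1)) := by
  rw [momentKernel_eq_right, setIntegral_indicator measurableSet_Ioi, Set.Ioi_inter_Ioi,
    max_eq_right hy.le, integral_const_mul, gaussQ]
  have : √(2 * π) ≠ 0 := by positivity
  field_simp

lemma integrable_kernel {k : ℝ} (hk : 0 < k) :
    Integrable (momentKernel k)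
      ((volume.restrict (Set.Ioi 0)).prod (volume.restrict (Set.Ioi 0))) := by
  rw [integrable_prod_iff' (momentKernel_measurable k).aestronglyMeasurable]
  constructor
  · filter_upwards [ae_restrict_mem measurableSet_Ioi] with t ht
    exact integrable_left hk ht
  · have h := (integrableOn_rpow_mul_exp_neg_mul_sq (b := 1 / 2) (by norm_num)
      (show -1 < k by linarith)).const_mul k⁻¹
    refine h.congr ?_
    filter_upwards [ae_restrict_mem measurableSet_Ioi] with t ht
    rw [← integral_left hk ht]
    refine setIntegral_congr_fun measurableSet_Ioi fun y hy => ?_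
    exact (norm_of_nonneg (momentKernel_nonneg k t hy)).symm

lemma integrableOn_gaussQ_mul_rpow {k : ℝ} (hk : 0 < k) :
    IntegrableOn (fun y => gaussQ y * y ^ (k - 1)) (Set.Ioi 0) := by
  have h := (integrable_kernel hk).integral_prod_left.const_mul (√(2 * π))⁻¹
  refine h.congr ?_
  filter_upwards [ae_restrict_mem measurableSet_Ioi] with y hy
  rw [integral_right k hy]
  have : √(2 * π) ≠ 0 := by positivity
  field_simp

lemma integral_gaussQ_mul_rpow {k : ℝ} (hk : 0 < k) :
    ∫ y in Set.Ioi 0, gaussQ y * y ^ (k - 1) =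
      2 ^ ((k - 1) / 2) * Gamma ((k + 1) / 2) / (√(2 * π) * k) := by
  have h0 : √(2 * π) ≠ 0 := by positivity
  have h1 : √(2 * π) * ∫ y in Set.Ioi 0, gaussQ y * y ^ (k - 1) =
      k⁻¹ * ∫ t in Set.Ioi 0, t ^ k * exp (-(1 / 2) * t ^ (2 : ℝ)) := by
    rw [← integral_const_mul, ← integral_const_mul,
      ← setIntegral_congr_fun measurableSet_Ioi (fun y hy => integral_right k hy),
      integral_integral_swap (f := fun y t => momentKernel k (y, t)) (integrable_kernel hk)]
    refine setIntegral_congr_fun measurableSet_Ioi fun t ht => ?_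
    simp only [integral_left hk ht, rpow_two]
  rw [integral_rpow_mul_exp_neg_mul_rpow (by norm_num) (by linarith) (by norm_num)] at h1
  have h2 : (1 / 2 : ℝ) ^ (-(k + 1) / 2) * (1 / 2) = 2 ^ ((k - 1) / 2) := by
    rw [one_div, inv_rpow (by norm_num), ← rpow_neg (by norm_num), ← rpow_neg_one 2,
      ← rpow_add (by norm_num)]
    congr 1
    ring
  rw [h2] at h1
  rw [eq_div_iff (by positivity)]
  field_simp at h1
  linarith

lemma gaussQ_nonneg (x : ℝ) : 0 ≤ gaussQ x :=
  mul_nonneg (by positivity) (integral_nonneg fun _ => (exp_pos _).le)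

lemma tendsto_damped_moment {k lam : ℝ} (hk : 0 < k) (hlam : 0 < lam) :
    Tendsto (fun s : ℝ => ∫ y in Set.Ioi 0, gaussQ y * y ^ (k - 1) * exp (-(y / s) / lam)) atTop
      (nhds (∫ y in Set.Ioi 0, gaussQ y * y ^ (k - 1))) := by
  have hI := integrableOn_gaussQ_mul_rpow hk
  refine tendsto_integral_filter_of_dominated_convergence
    (fun y => gaussQ y * y ^ (k - 1)) ?_ ?_ hI ?_
  · refine Eventually.of_forall fun s => hI.aestronglyMeasurable.mul ?_
    exact (by fun_prop : Measurable fun y : ℝ => exp (-(y / s) / lam)).aestronglyMeasurable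
  · filter_upwards [eventually_gt_atTop 0] with s hs
    filter_upwards [ae_restrict_mem measurableSet_Ioi] with y hy
    have hy' : 0 < y := hy
    have hnn : 0 ≤ gaussQ y * y ^ (k - 1) := mul_nonneg (gaussQ_nonneg y) (by positivity)
    rw [norm_of_nonneg (mul_nonneg hnn (exp_pos _).le)]
    refine mul_le_of_le_one_right hnn (exp_le_one_iff.2 ?_)
    rw [neg_div]
    exact neg_nonpos.2 (by positivity)
  · refine Eventually.of_forall fun y => ?_
    have h : Tendsto (fun s : ℝ => -(y / s) / lam) atTop (nhds (-0 / lam)) :=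
      ((tendsto_const_nhds.div_atTop tendsto_id).neg).div_const lam
    have h2 := ((continuous_exp.tendsto _).comp h).const_mul (gaussQ y * y ^ (k - 1))
    simpa [Function.comp_def] using h2

lemma rescaled_average (k lam ν g : ℝ) (hν : 0 < ν) (hg : 0 < g) :
    g ^ (k / 2) * ∫ x in Set.Ioi (0 : ℝ), gaussQ (x * √(ν * g)) *
        (x ^ (k - 1) * exp (-x / lam) / (Gamma k * lam ^ k)) =
      (Gamma k * lam ^ k * ν ^ (k / 2))⁻¹ *
        ∫ y in Set.Ioi 0, gaussQ y * y ^ (k - 1) * exp (-(y / √(ν * g)) / lam) := by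
  have hsk : √(ν * g) ^ k = ν ^ (k / 2) * g ^ (k / 2) := by
    rw [sqrt_eq_rpow, ← rpow_mul (by positivity), ← mul_rpow hν.le hg.le]
    congr 1
    ring
  have hs : 0 < √(ν * g) := by positivity
  generalize √(ν * g) = s at *
  have hsub := integral_comp_mul_right_Ioi
    (fun y => gaussQ y * y ^ (k - 1) * exp (-(y / s) / lam)) 0 hs
  rw [zero_mul, smul_eq_mul] at hsub
  have h1 : ∫ y in Set.Ioi 0, gaussQ y * y ^ (k - 1) * exp (-(y / s) / lam) =
      s * ∫ x in Set.Ioi 0, gaussQ (x * s) * (x * s) ^ (k - 1) * exp (-(x * s / s) / lam) := by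
    rw [hsub]
    field_simp
  have hνk : ν ^ (k / 2) ≠ 0 := by positivity
  rw [h1, ← integral_const_mul, ← integral_const_mul, ← integral_const_mul]
  refine setIntegral_congr_fun measurableSet_Ioi fun x hx => ?_
  have hx' : 0 < x := hx
  have h3 : s * s ^ (k - 1) = ν ^ (k / 2) * g ^ (k / 2) := by
    rw [← hsk, rpow_sub_one hs.ne']
    field_simp
  simp only [mul_rpow hx'.le hs.le, mul_div_cancel_right₀ x hs.ne', mul_inv, div_eq_mul_inv]
  simp only [div_eq_mul_inv] at h3 hνk
  linear_combination (-(Gamma k)⁻¹ * (lam ^ k)⁻¹ * (ν ^ (k * 2⁻¹))⁻¹ * gaussQ (x * s) *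
      x ^ (k - 1) * exp (-x * lam⁻¹)) * h3 -
    ((Gamma k)⁻¹ * (lam ^ k)⁻¹ * g ^ (k * 2⁻¹) * gaussQ (x * s) *
      x ^ (k - 1) * exp (-x * lam⁻¹)) * mul_inv_cancel₀ hνk

theorem stmt_11 (k lam ν : ℝ) (hk : 0 < k) (hlam : 0 < lam) (hν : 0 < ν) :
    Tendsto (fun γbar : ℝ =>
        γbar ^ (k/2) * ∫ x in Set.Ioi (0:ℝ),
          gaussQ (x * Real.sqrt (ν * γbar)) *
            (x ^ (k - 1) * Real.exp (-x / lam) / (Real.Gamma k * lam ^ k)))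
      atTop
      (nhds ((2:ℝ) ^ ((k-1)/2) * Real.Gamma ((k+1)/2) /
        (Real.sqrt (2*π) * k * Real.Gamma k * lam ^ k * ν ^ (k/2)))) := by
  have hs : Tendsto (fun g : ℝ => √(ν * g)) atTop atTop :=
    tendsto_sqrt_atTop.comp (tendsto_id.const_mul_atTop hν)
  have h := ((tendsto_damped_moment hk hlam).comp hs).const_mul
    (Gamma k * lam ^ k * ν ^ (k / 2))⁻¹
  rw [integral_gaussQ_mul_rpow hk] at h
  have hlim : (Gamma k * lam ^ k * ν ^ (k / 2))⁻¹ *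
      (2 ^ ((k - 1) / 2) * Gamma ((k + 1) / 2) / (√(2 * π) * k)) =
      (2:ℝ) ^ ((k-1)/2) * Gamma ((k+1)/2) /
        (√(2*π) * k * Gamma k * lam ^ k * ν ^ (k/2)) := by
    rw [inv_mul_eq_div, div_div]
    congr 1
    ring
  rw [hlim] at h
  refine h.congr' ?_
  filter_upwards [eventually_gt_atTop 0] with g hg
  exact (rescaled_average k lam ν g hν hg).symm
end

section
/- Let Υ_u, Ῡ_u, Υ_f, Ῡ_f, Υ̂, Υ′, ζ_u, ζ_f, ζ_g, ζ_h all be strictly positive real constants. For each positive integer N define G_d(N) = (1/2) · Υ_u² ζ_u (Υ_f ζ_f^{1/2} + N Υ̂ ζ_g^{1/2} ζ_h^{1/2})² / [ ζ_u (Ῡ_u + Υ_u²)(Ῡ_f ζ_f + N Υ′ ζ_g ζ_h) + Ῡ_u ζ_u (Υ_f ζ_f^{1/2} + N Υ̂ ζ_g^{1/2} ζ_h^{1/2})² ]. Then lim_{N → ∞} G_d(N) = Υ_u² / (2 Ῡ_u). In particular, with Υ_u = Γ(m_u + 1/2)/Γ(m_u) and Ῡ_u = m_u − Υ_u², the limit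 equals (1/2) ( m_u (Γ(m_u)/Γ(m_u + 1/2))² − 1 )^{−1}, which depends only on the tag-to-reader fading parameter m_u and not on N. -/
/-!
Dividing numerator and denominator by `N²` writes the diversity order as a rational function of
`1 / N` whose denominator is nonzero at `0`. The part of the variance that is linear in `N` vanishes
in the limit, and the squared mean cancels, leaving `Uu² / (2 Ubu)`. The Gamma-function form is the
identity `Uu² / (mu - Uu²) = (mu / Uu² - 1)⁻¹`.
-/

open Real Filter

theorem stmt_12 (Uu Ubu Uf Ubf Uhat U' zu zf zg zh : ℝ)
    (hUu : 0 < Uu) (hUbu : 0 < Ubu) (hUf : 0 < Uf) (hUbf : 0 < Ubf)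
    (hUhat : 0 < Uhat) (hU' : 0 < U') (hzu : 0 < zu) (hzf : 0 < zf)
    (hzg : 0 < zg) (hzh : 0 < zh) :
    Tendsto (fun N : ℕ =>
        (1/2) * (Uu^2 * zu * (Uf * Real.sqrt zf + N * Uhat * Real.sqrt zg * Real.sqrt zh)^2) /
          (zu * (Ubu + Uu^2) * (Ubf * zf + N * U' * zg * zh)
            + Ubu * zu * (Uf * Real.sqrt zf + N * Uhat * Real.sqrt zg * Real.sqrt zh)^2))
      atTop (nhds (Uu^2 / (2 * Ubu))) ∧
    (∀ mu : ℝ, 0 < mu →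
      Uu = Real.Gamma (mu + 1/2) / Real.Gamma mu →
      Ubu = mu - Uu^2 →
      Uu^2 / (2 * Ubu) = (1/2) * (mu * (Real.Gamma mu / Real.Gamma (mu + 1/2))^2 - 1)⁻¹) := by
  constructor
  · set A := Uf * Real.sqrt zf
    have hB : 0 < Uhat * Real.sqrt zg * Real.sqrt zh := by positivity
    set B := Uhat * Real.sqrt zg * Real.sqrt zh with hBdef
    -- the diversity order as a function of `x = 1 / N`
    let F : ℝ → ℝ := fun x =>
      (1/2) * (Uu^2 * zu * (A * x + B)^2) /
        (zu * (Ubu + Uu^2) * (Ubf * zf * x^2 + U' * zg * zh * x) + Ubu * zu * (A * x + B)^2)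
    have hF0 : F 0 = Uu^2 / (2 * Ubu) := by
      simp only [F]
      field_simp
      simp
    have hF : ContinuousAt F 0 := by
      refine ContinuousAt.div (by fun_prop) (by fun_prop) ?_
      have : 0 < Ubu * zu * B^2 := by positivity
      simpa using this.ne'
    have hlim : Tendsto (fun N : ℕ => F ((N : ℝ)⁻¹)) atTop (nhds (Uu^2 / (2 * Ubu))) := by
      rw [← hF0]
      exact hF.tendsto.comp tendsto_inv_atTop_nhds_zero_nat
    refine hlim.congr' ?_
    filter_upwards [eventually_gt_atTop 0] with N hN
    have hN' : (N : ℝ) ≠ 0 := by exact_mod_cast hN.ne'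
    have hAB : A + N * Uhat * Real.sqrt zg * Real.sqrt zh = N * (A * (N : ℝ)⁻¹ + B) := by
      rw [hBdef]; field_simp
    have hCD : Ubf * zf + N * U' * zg * zh
        = (N : ℝ)^2 * (Ubf * zf * ((N : ℝ)⁻¹)^2 + U' * zg * zh * (N : ℝ)⁻¹) := by
      field_simp
    rw [hAB, hCD]
    simp only [F]
    rw [← mul_div_mul_left _ _ (pow_ne_zero 2 hN')]
    congr 1 <;> ring
  · intro mu _ hU hUb
    have hinv : Real.Gamma mu / Real.Gamma (mu + 1/2) = Uu⁻¹ := by rw [hU, inv_div]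
    have hsub : mu * Uu⁻¹ ^ 2 - 1 = Ubu / Uu ^ 2 := by
      rw [hUb]; field_simp
    rw [hinv, hsub, inv_div]
    field_simp
end
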